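/- Fundamental Theorem of Calculus for the Caputo derivative: Let 0 < α < 1 and let f : ℝ → ℝ be differentiable on [a,b] (a < b) with derivative f' integrable on [a,b]. Then (1/Γ(α)) ∫_a^b (b-x)^(α-1) · ᶜD^α f(x) dx = f(b) − f(a), where ᶜD^α f(x) = (1/Γ(1−α)) ∫_a^x f'(u) · (x−u)^(−α) du. -/

import Mathlib

open MeasureTheory Real Set

/-!
Write `J^α` for the Riemann–Liouville integral based at `a`. Exchanging the order of integration
over the triangle `a < u < x < b` turns `J^α (J^β g)` at `b` into the integral of `g u` against
`∫ x in u..b, (b - x) ^ (α - 1) * (x - u) ^ (β - 1)`, an Euler Beta integral equal to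
`(b - u) ^ (α + β - 1) * Γ α * Γ β / Γ (α + β)`; hence the semigroup law `J^α ∘ J^β = J^(α + β)`.
The Caputo derivative of order `α` is `J^(1 - α)` of the derivative, so `J^α` maps it to `J^1` of
the derivative, and the classical fundamental theorem of calculus concludes.
-/

section BetaKernel

variable {p q : ℝ}

lemma integral_rpow_mul_sub_rpow (hp : 0 < p) (hq : 0 < q) {c : ℝ} (hc : 0 < c) :
    ∫ x in (0 : ℝ)..c, x ^ (p - 1) * (c - x) ^ (q - 1) =
      c ^ (p + q - 1) * ProbabilityTheory.beta p q := by
  have beta_eq : Complex.betaIntegral p q = ProbabilityTheory.beta p q := by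
    rw [Complex.betaIntegral_eq_Gamma_mul_div _ _ (by simpa) (by simpa), ProbabilityTheory.beta,
      ← Complex.ofReal_add]
    simp only [Complex.Gamma_ofReal, Complex.ofReal_mul, Complex.ofReal_div]
  apply Complex.ofReal_injective
  rw [← intervalIntegral.integral_ofReal, Complex.ofReal_mul, Complex.ofReal_cpow hc.le, ← beta_eq]
  push_cast
  rw [← Complex.betaIntegral_scaled _ _ hc]
  refine intervalIntegral.integral_congr fun x hx ↦ ?_
  rw [uIcc_of_le hc.le] at hx
  simp only [Complex.ofReal_cpow hx.1, Complex.ofReal_cpow (sub_nonneg.2 hx.2), Complex.ofReal_sub,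
    Complex.ofReal_one]

lemma integral_sub_rpow_mul_sub_rpow (hp : 0 < p) (hq : 0 < q) {u b : ℝ} (hub : u < b) :
    ∫ x in u..b, (b - x) ^ (p - 1) * (x - u) ^ (q - 1) =
      (b - u) ^ (p + q - 1) * ProbabilityTheory.beta p q := by
  rw [← integral_rpow_mul_sub_rpow hp hq (sub_pos.2 hub)]
  simpa only [sub_self, sub_sub_sub_cancel_left, sub_sub_cancel] using
    intervalIntegral.integral_comp_sub_left
      (fun x ↦ x ^ (p - 1) * (b - u - x) ^ (q - 1)) b (a := u) (b := b)

lemma integrableOn_sub_rpow_mul_sub_rpow (hp : 0 < p) (hq : 0 < q) {u b : ℝ} (hub : u < b) :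
    IntegrableOn (fun x ↦ (b - x) ^ (p - 1) * (x - u) ^ (q - 1)) (Ioo u b) := by
  apply Integrable.of_integral_ne_zero
  rw [← integral_Ioc_eq_integral_Ioo, ← intervalIntegral.integral_of_le hub.le,
    integral_sub_rpow_mul_sub_rpow hp hq hub]
  exact (mul_pos (rpow_pos_of_pos (sub_pos.2 hub) _) (ProbabilityTheory.beta_pos hp hq)).ne'

end BetaKernel

section Triangle

/-- The open triangle `a < u < x < b` in the `(u, x)`-plane, over which the iterated integrals
`∫ x in a..b, ∫ u in a..x, F u x` and `∫ u in a..b, ∫ x in u..b, F u x` are taken. -/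
def integrationTriangle (a b : ℝ) : Set (ℝ × ℝ) :=
  {z | a < z.1 ∧ z.1 < z.2 ∧ z.2 < b}

variable {E : Type*} [NormedAddCommGroup E] {a b : ℝ} {F : ℝ → ℝ → E}

lemma measurableSet_integrationTriangle : MeasurableSet (integrationTriangle a b) :=
  (measurableSet_lt measurable_const measurable_fst).inter
    ((measurableSet_lt measurable_fst measurable_snd).inter
      (measurableSet_lt measurable_snd measurable_const))

lemma integrationTriangle_indicator_left (F : ℝ → ℝ → E) (u : ℝ) :
    (fun x ↦ (integrationTriangle a b).indicator (Function.uncurry F) (u, x)) =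
      (Ioo a b).indicator (fun u ↦ (Ioo u b).indicator (F u)) u := by
  ext x
  by_cases hu : u ∈ Ioo a b
  · simp [integrationTriangle, indicator, hu.1, hu.2]
  · have : (u, x) ∉ integrationTriangle a b := fun h ↦ hu ⟨h.1, h.2.1.trans h.2.2⟩
    simp only [indicator_of_notMem this, indicator_of_notMem hu, Pi.zero_apply]

lemma integrationTriangle_indicator_right (F : ℝ → ℝ → E) (x : ℝ) :
    (fun u ↦ (integrationTriangle a b).indicator (Function.uncurry F) (u, x)) =
      (Ioo a b).indicator (fun x ↦ (Ioo a x).indicator fun u ↦ F u x) x := by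
  ext u
  by_cases hx : x ∈ Ioo a b
  · simp [integrationTriangle, indicator, hx.1, hx.2]
  · have : (u, x) ∉ integrationTriangle a b := fun h ↦ hx ⟨h.1.trans h.2.1, h.2.2⟩
    simp only [indicator_of_notMem this, indicator_of_notMem hx, Pi.zero_apply]

lemma integral_integrationTriangle_indicator_left [NormedSpace ℝ E]
    (F : ℝ → ℝ → E) (u : ℝ) :
    ∫ x, (integrationTriangle a b).indicator (Function.uncurry F) (u, x) =
      (Ioo a b).indicator (fun u ↦ ∫ x in u..b, F u x) u := by
  rw [integrationTriangle_indicator_left]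
  by_cases hu : u ∈ Ioo a b
  · simp only [indicator_of_mem hu, integral_indicator measurableSet_Ioo,
      intervalIntegral.integral_of_le hu.2.le, integral_Ioc_eq_integral_Ioo]
  · simp only [indicator_of_notMem hu, integral_zero']

lemma integral_integrationTriangle_indicator_right [NormedSpace ℝ E]
    (F : ℝ → ℝ → E) (x : ℝ) :
    ∫ u, (integrationTriangle a b).indicator (Function.uncurry F) (u, x) =
      (Ioo a b).indicator (fun x ↦ ∫ u in a..x, F u x) x := by
  rw [integrationTriangle_indicator_right]
  by_cases hx : x ∈ Ioo a b
  · simp only [indicator_of_mem hx, integral_indicator measurableSet_Ioo,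
      intervalIntegral.integral_of_le hx.1.le, integral_Ioc_eq_integral_Ioo]
  · simp only [indicator_of_notMem hx, integral_zero']

lemma intervalIntegral_integral_swap_triangle [NormedSpace ℝ E] (hab : a ≤ b)
    (hF : IntegrableOn (Function.uncurry F) (integrationTriangle a b)) :
    ∫ x in a..b, ∫ u in a..x, F u x = ∫ u in a..b, ∫ x in u..b, F u x := by
  rw [← integrable_indicator_iff measurableSet_integrationTriangle] at hF
  have swap := integral_integral_swap
    (f := fun u x ↦ (integrationTriangle a b).indicator (Function.uncurry F) (u, x)) hF
  simpa only [integral_integrationTriangle_indicator_left,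
    integral_integrationTriangle_indicator_right, integral_indicator measurableSet_Ioo,
    ← integral_Ioc_eq_integral_Ioo, ← intervalIntegral.integral_of_le hab] using swap.symm

lemma integrableOn_integrationTriangle
    (hm : AEStronglyMeasurable (Function.uncurry F) (volume.restrict (integrationTriangle a b)))
    (hF : ∀ u ∈ Ioo a b, IntegrableOn (F u) (Ioo u b))
    (hF_norm : IntegrableOn (fun u ↦ ∫ x in u..b, ‖F u x‖) (Ioo a b)) :
    IntegrableOn (Function.uncurry F) (integrationTriangle a b) := by
  rw [← integrable_indicator_iff measurableSet_integrationTriangle, Measure.volume_eq_prod,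
    integrable_prod_iff ((aestronglyMeasurable_indicator_iff
      measurableSet_integrationTriangle).2 hm)]
  constructor
  · refine .of_forall fun u ↦ ?_
    rw [integrationTriangle_indicator_left]
    by_cases hu : u ∈ Ioo a b
    · rw [indicator_of_mem hu, integrable_indicator_iff measurableSet_Ioo]
      exact hF u hu
    · rw [indicator_of_notMem hu]
      exact integrable_zero ℝ E volume
  · simp only [norm_indicator_eq_indicator_norm]
    refine ((integrable_indicator_iff measurableSet_Ioo).2 hF_norm).congr (.of_forall fun u ↦ ?_)
    exact (integral_integrationTriangle_indicator_left (fun u x ↦ ‖F u x‖) u).symm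

end Triangle

section RiemannLiouville

/-- The left Riemann–Liouville fractional integral `J^α g` of order `α` based at `a`. -/
noncomputable def riemannLiouvilleIntegral {E : Type*} [NormedAddCommGroup E] [NormedSpace ℝ E]
    (α a : ℝ) (g : ℝ → E) (x : ℝ) : E :=
  (1 / Gamma α) • ∫ u in a..x, (x - u) ^ (α - 1) • g u

/-- The left Caputo fractional derivative `ᶜD^α f` of order `α ∈ (0, 1)` based at `a`, encoded as
the Riemann–Liouville integral of order `1 - α` of the derivative; the kernel exponent `-α` thus
appears as `1 - α - 1`. -/
noncomputable def caputoDeriv {E : Type*} [NormedAddCommGroup E] [NormedSpace ℝ E]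
    (α a : ℝ) (f : ℝ → E) : ℝ → E :=
  riemannLiouvilleIntegral (1 - α) a (deriv f)

variable {E : Type*} [NormedAddCommGroup E] [NormedSpace ℝ E] {a b p q : ℝ} {g : ℝ → E}

lemma riemannLiouvilleIntegral_one (a : ℝ) (g : ℝ → E) (x : ℝ) :
    riemannLiouvilleIntegral 1 a g x = ∫ u in a..x, g u := by
  simp only [riemannLiouvilleIntegral, Gamma_one, div_one, sub_self, rpow_zero, one_smul]

lemma aestronglyMeasurable_of_rpow_smul {r : ℝ}
    (hg : AEStronglyMeasurable (fun u ↦ (b - u) ^ r • g u) (volume.restrict (Ioo a b))) :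
    AEStronglyMeasurable g (volume.restrict (Ioo a b)) := by
  have hm : AEStronglyMeasurable (fun u ↦ (b - u) ^ (-r) • (b - u) ^ r • g u)
      (volume.restrict (Ioo a b)) :=
    (Measurable.aestronglyMeasurable (by fun_prop)).smul hg
  refine hm.congr (ae_restrict_of_forall_mem measurableSet_Ioo fun u hu ↦ ?_)
  simp only [smul_smul, ← rpow_add (sub_pos.2 hu.2), neg_add_cancel, rpow_zero, one_smul]

lemma integral_norm_sub_rpow_mul_sub_rpow_smul (hp : 0 < p) (hq : 0 < q) {u : ℝ} (hub : u < b)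
    (c : E) :
    ∫ x in u..b, ‖((b - x) ^ (p - 1) * (x - u) ^ (q - 1)) • c‖ =
      ProbabilityTheory.beta p q * ‖(b - u) ^ (p + q - 1) • c‖ := by
  have norm_eq : ∀ x ∈ Ioo u b, ‖((b - x) ^ (p - 1) * (x - u) ^ (q - 1)) • c‖ =
      (b - x) ^ (p - 1) * (x - u) ^ (q - 1) * ‖c‖ := fun x hx ↦
    norm_smul_of_nonneg (mul_nonneg (rpow_nonneg (sub_nonneg.2 hx.2.le) _)
      (rpow_nonneg (sub_nonneg.2 hx.1.le) _)) c
  rw [intervalIntegral.integral_congr_Ioo_of_le hub.le norm_eq, intervalIntegral.integral_mul_const,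
    integral_sub_rpow_mul_sub_rpow hp hq hub,
    norm_smul_of_nonneg (rpow_nonneg (sub_nonneg.2 hub.le) _)]
  ring

lemma integrableOn_integrationTriangle_rpow_smul (hp : 0 < p) (hq : 0 < q)
    (hg : IntegrableOn (fun u ↦ (b - u) ^ (p + q - 1) • g u) (Ioo a b)) :
    IntegrableOn (Function.uncurry fun u x ↦ ((b - x) ^ (p - 1) * (x - u) ^ (q - 1)) • g u)
      (integrationTriangle a b) := by
  refine integrableOn_integrationTriangle ?_ (fun u hu ↦ ?_) ?_
  · have hg_fst : AEStronglyMeasurable (fun z : ℝ × ℝ ↦ g z.1)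
        (volume.restrict (Ioo a b ×ˢ univ)) := by
      rw [Measure.volume_eq_prod, ← Measure.prod_restrict]
      exact (aestronglyMeasurable_of_rpow_smul hg.aestronglyMeasurable).comp_fst
    have triangle_subset : integrationTriangle a b ⊆ Ioo a b ×ˢ univ :=
      fun z hz ↦ ⟨⟨hz.1, hz.2.1.trans hz.2.2⟩, mem_univ _⟩
    exact (Measurable.aestronglyMeasurable (by fun_prop)).smul (hg_fst.mono_set triangle_subset)
  · exact Integrable.smul_const (integrableOn_sub_rpow_mul_sub_rpow hp hq hu.2) (g u)
  · refine IntegrableOn.congr_fun (hg.norm.const_mul (ProbabilityTheory.beta p q))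
      (fun u hu ↦ ?_) measurableSet_Ioo
    exact (integral_norm_sub_rpow_mul_sub_rpow_smul hp hq hu.2 (g u)).symm

lemma integral_rpow_smul_integral_rpow_smul [CompleteSpace E]
    (hp : 0 < p) (hq : 0 < q) (hab : a ≤ b)
    (hg : IntervalIntegrable (fun u ↦ (b - u) ^ (p + q - 1) • g u) volume a b) :
    ∫ x in a..b, (b - x) ^ (p - 1) • ∫ u in a..x, (x - u) ^ (q - 1) • g u =
      ProbabilityTheory.beta p q • ∫ u in a..b, (b - u) ^ (p + q - 1) • g u :=
  calc
    _ = ∫ x in a..b, ∫ u in a..x, ((b - x) ^ (p - 1) * (x - u) ^ (q - 1)) • g u := by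
      simp only [mul_smul, intervalIntegral.integral_smul]
    _ = ∫ u in a..b, ∫ x in u..b, ((b - x) ^ (p - 1) * (x - u) ^ (q - 1)) • g u :=
      intervalIntegral_integral_swap_triangle hab
        (integrableOn_integrationTriangle_rpow_smul hp hq (hg.1.mono_set Ioo_subset_Ioc_self))
    _ = ∫ u in a..b, ProbabilityTheory.beta p q • (b - u) ^ (p + q - 1) • g u := by
      refine intervalIntegral.integral_congr_Ioo_of_le hab fun u hu ↦ ?_
      rw [intervalIntegral.integral_smul_const, integral_sub_rpow_mul_sub_rpow hp hq hu.2,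
        mul_comm, mul_smul]
    _ = _ := intervalIntegral.integral_smul _ _

theorem riemannLiouvilleIntegral_riemannLiouvilleIntegral [CompleteSpace E]
    (hp : 0 < p) (hq : 0 < q) (hab : a ≤ b)
    (hg : IntervalIntegrable (fun u ↦ (b - u) ^ (p + q - 1) • g u) volume a b) :
    riemannLiouvilleIntegral p a (riemannLiouvilleIntegral q a g) b =
      riemannLiouvilleIntegral (p + q) a g b := by
  have hΓp : Gamma p ≠ 0 := (Gamma_pos_of_pos hp).ne'
  have hΓq : Gamma q ≠ 0 := (Gamma_pos_of_pos hq).ne'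
  have gamma_mul_beta :
      1 / Gamma p * (1 / Gamma q) * ProbabilityTheory.beta p q = 1 / Gamma (p + q) := by
    rw [ProbabilityTheory.beta]
    field_simp
  simp only [riemannLiouvilleIntegral, smul_comm _ (1 / Gamma q) (_ : E),
    intervalIntegral.integral_smul, integral_rpow_smul_integral_rpow_smul hp hq hab hg]
  rw [smul_smul, smul_smul, mul_comm (1 / Gamma q), gamma_mul_beta]

theorem caputo_fundamental_theorem_general [CompleteSpace E] {α : ℝ} (hα : 0 < α) (hα1 : α < 1)
    (hab : a ≤ b) {f : ℝ → E} {s : Set ℝ} (hs : s.Countable) (hcont : ContinuousOn f (Icc a b))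
    (hdiff : ∀ x ∈ Ioo a b \ s, DifferentiableAt ℝ f x)
    (hint : IntervalIntegrable (deriv f) volume a b) :
    riemannLiouvilleIntegral α a (caputoDeriv α a f) b = f b - f a := by
  have order_add : α + (1 - α) = 1 := add_sub_cancel α 1
  have hint' : IntervalIntegrable (fun u ↦ (b - u) ^ (α + (1 - α) - 1) • deriv f u) volume a b := by
    simpa only [order_add, sub_self, rpow_zero, one_smul] using hint
  calc
    _ = riemannLiouvilleIntegral 1 a (deriv f) b := by
      rw [caputoDeriv, riemannLiouvilleIntegral_riemannLiouvilleIntegral hα (sub_pos.2 hα1) hab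
        hint', order_add]
    _ = ∫ u in a..b, deriv f u := riemannLiouvilleIntegral_one a _ b
    _ = f b - f a := integral_eq_of_hasDerivAt_off_countable_of_le f _ hab hs hcont
      (fun x hx ↦ (hdiff x hx).hasDerivAt) hint

end RiemannLiouville

/-- Fundamental Theorem of Calculus for the Caputo derivative:
for `0 < α < 1` and `f` differentiable on `[a,b]` with integrable derivative,
`J^α` at `b` of the Caputo derivative `ᶜD^α f` equals `f b - f a`. -/
theorem caputo_fundamental_theorem
    (α a b : ℝ) (hα : 0 < α) (hα1 : α < 1) (hab : a < b)
    (f : ℝ → ℝ)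
    (hdiff : ∀ x ∈ Set.Icc a b, DifferentiableAt ℝ f x)
    (hint : IntervalIntegrable (deriv f) volume a b) :
    (1 / Real.Gamma α) *
      ∫ x in a..b, (b - x) ^ (α - 1) *
        ((1 / Real.Gamma (1 - α)) * ∫ u in a..x, deriv f u * (x - u) ^ (-α)) =
    f b - f a := by
  simpa only [riemannLiouvilleIntegral, caputoDeriv, smul_eq_mul, sub_sub_cancel_left,
    mul_comm (deriv f _)] using
    caputo_fundamental_theorem_general hα hα1 hab.le countable_empty
      (fun x hx ↦ (hdiff x hx).continuousAt.continuousWithinAt)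
      (fun x hx ↦ hdiff x (Ioo_subset_Icc_self hx.1)) hint
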